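/- Majority dynamics does not enable positive PlurDom-consensus existence control: there exists a profile P (over at least 3 alternatives) that has a PlurDom-consensus alternative such that for every update order σ, MD_σ(P) has no PlurDom-consensus alternative. -/

import Mathlib

attribute [local instance] Classical.propDecidable

noncomputable section

/-- A preference over the set of alternatives `A`: a binary relation. -/
abbrev Pref (A : Type) := A → A → Prop

/-- A preference is a strict partial order: irreflexive and transitive. -/
def IsPref {A : Type} (pref : Pref A) : Prop :=
  Irreflexive pref ∧ Transitive pref

variable {A : Type} [Fintype A] [DecidableEq A]

/-- The support `n_P(ab)`: the number of agents preferring `a` to `b` in profile `P`. -/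
def support {n : ℕ} (P : Fin n → Pref A) (a b : A) : ℕ :=
  (Finset.univ.filter fun i => P i a b).card

/-- An update order: a list of ordered pairs of distinct alternatives containing,
for each unordered pair `{a, b}` of distinct alternatives, exactly one of `ab` or `ba`,
each exactly once. -/
def IsUpdateOrder (σ : List (A × A)) : Prop :=
  (∀ p ∈ σ, p.1 ≠ p.2) ∧
  (∀ a b : A, a ≠ b → σ.count (a, b) + σ.count (b, a) = 1)

/-- One step of majority dynamics, discussing the pair `p`: agents already ranking
`p.1` versus `p.2` keep their preference; every other agent adds `p.1 ≻ p.2` if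
`n_P(p.1 p.2) ≥ n_P(p.2 p.1)` (ties broken in favour of the first alternative of the
pair), and otherwise adds `p.2 ≻ p.1`, then takes the transitive closure. -/
def mdStep {n : ℕ} (P : Fin n → Pref A) (p : A × A) : Fin n → Pref A :=
  fun i =>
    if P i p.1 p.2 ∨ P i p.2 p.1 then P i
    else if support P p.2 p.1 ≤ support P p.1 p.2 then
      Relation.TransGen (fun x y => P i x y ∨ (x = p.1 ∧ y = p.2))
    else
      Relation.TransGen (fun x y => P i x y ∨ (x = p.2 ∧ y = p.1))

/-- Majority dynamics `MD_σ(P)`: process the pairs of the update order `σ` in order. -/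
def MD {n : ℕ} (σ : List (A × A)) (P : Fin n → Pref A) : Fin n → Pref A :=
  σ.foldl mdStep P

/-- `a` is a Condorcet winner in `P`. -/
def CondorcetWinner {n : ℕ} (P : Fin n → Pref A) (a : A) : Prop :=
  ∀ b, b ≠ a → support P b a < support P a b

/-- `a` is a Condorcet loser in `P`. -/
def CondorcetLoser {n : ℕ} (P : Fin n → Pref A) (a : A) : Prop :=
  ∀ b, b ≠ a → support P a b < support P b a

/-- `a` is undominated in a preference. -/
def Undominated {A : Type} (pref : Pref A) (a : A) : Prop := ∀ b, ¬ pref b a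

/-- `a` is dominant in a preference. -/
def Dominant {A : Type} (pref : Pref A) (a : A) : Prop := ∀ b, b ≠ a → pref a b

/-- `a` is dominated (by every other alternative) in a preference. -/
def DominatedIn {A : Type} (pref : Pref A) (a : A) : Prop := ∀ b, b ≠ a → pref b a

/-- Number of preferences of `P` in which `a` is undominated. -/
def udCount {n : ℕ} (P : Fin n → Pref A) (a : A) : ℕ :=
  (Finset.univ.filter fun i => Undominated (P i) a).card

/-- Number of preferences of `P` in which `a` is dominant. -/
def domCount {n : ℕ} (P : Fin n → Pref A) (a : A) : ℕ :=
  (Finset.univ.filter fun i => Dominant (P i) a).card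

/-- Number of preferences of `P` in which `a` is dominated. -/
def domdCount {n : ℕ} (P : Fin n → Pref A) (a : A) : ℕ :=
  (Finset.univ.filter fun i => DominatedIn (P i) a).card

/-- `a` is undominated in at least one preference and no alternative is undominated
in strictly more preferences than `a`. -/
def PlurUDTop {n : ℕ} (P : Fin n → Pref A) (a : A) : Prop :=
  0 < udCount P a ∧ ∀ b, udCount P b ≤ udCount P a

/-- `a` is the PlurUD-consensus alternative of `P`. -/
def PlurUDConsensus {n : ℕ} (P : Fin n → Pref A) (a : A) : Prop :=
  PlurUDTop P a ∧ ∀ b, PlurUDTop P b → b = a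

/-- `a` is dominant in at least one preference and no alternative is dominant
in strictly more preferences than `a`. -/
def PlurDomTop {n : ℕ} (P : Fin n → Pref A) (a : A) : Prop :=
  0 < domCount P a ∧ ∀ b, domCount P b ≤ domCount P a

/-- `a` is the PlurDom-consensus alternative of `P`. -/
def PlurDomConsensus {n : ℕ} (P : Fin n → Pref A) (a : A) : Prop :=
  PlurDomTop P a ∧ ∀ b, PlurDomTop P b → b = a

/-- `a` is dominated in at least one preference and no alternative is dominated
in strictly more preferences than `a`. -/
def PlurDomdTop {n : ℕ} (P : Fin n → Pref A) (a : A) : Prop :=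
  0 < domdCount P a ∧ ∀ b, domdCount P b ≤ domdCount P a

/-- `a` is the (unique) plurality dominated alternative of `P`. -/
def PlurDomdConsensus {n : ℕ} (P : Fin n → Pref A) (a : A) : Prop :=
  PlurDomdTop P a ∧ ∀ b, PlurDomdTop P b → b = a

/-- `a` is the MajUD-consensus alternative of `P`: undominated in strictly more than
`n / 2` of the preferences, and the unique alternative with this property. -/
def MajUDConsensus {n : ℕ} (P : Fin n → Pref A) (a : A) : Prop :=
  (n < 2 * udCount P a) ∧ ∀ b, n < 2 * udCount P b → b = a

/-- `a` is the MajDom-consensus alternative of `P`: dominant in strictly more than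
`n / 2` of the preferences (such an alternative is automatically unique). -/
def MajDomConsensus {n : ℕ} (P : Fin n → Pref A) (a : A) : Prop :=
  n < 2 * domCount P a

/-- `a` is the UnanUD-consensus alternative of `P`: undominated in every preference,
and the unique alternative with this property. -/
def UnanUDConsensus {n : ℕ} (P : Fin n → Pref A) (a : A) : Prop :=
  (∀ i, Undominated (P i) a) ∧ ∀ b, (∀ i, Undominated (P i) b) → b = a

/-- `a` is the UnanDom-consensus alternative of `P`: dominant in every preference. -/
def UnanDomConsensus {n : ℕ} (P : Fin n → Pref A) (a : A) : Prop :=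
  ∀ i, Dominant (P i) a

/-- A preference is a strict weak ordering: there is an ordered partition of the
alternatives into levels (given by a level function `f`) such that alternatives in the
same level are incomparable, and `a ≻ b` exactly when `a` is in an earlier level. -/
def IsSWO (pref : Pref A) : Prop :=
  ∃ (k : ℕ) (f : A → Fin k), ∀ a b : A, pref a b ↔ f a < f b

/-!
Two agents suffice. The leader ranks all alternatives as `a ≻ b ≻ c ≻ ⋯`; the follower only puts
`a` below everything else. Initially `a` is dominant for the leader and nothing is dominant for the
follower. Whenever a pair not yet ranked by the follower is discussed, the leader is the only one
with an opinion, so the follower copies it; whatever the update order, the follower ends with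
`b ≻ c ≻ ⋯ ≻ a`, and `a` and `b` tie.
-/

section MajorityDynamics

variable {α : Type} {n : ℕ} {P Q : Fin n → Pref α}

/-- The preference `R` ranks `x` versus `y`, one way or the other. -/
def Ranks (R : Pref α) (x y : α) : Prop := R x y ∨ R y x

lemma Ranks.symm {R : Pref α} {x y : α} (h : Ranks R x y) : Ranks R y x := Or.symm h

lemma Ranks.mono {R S : Pref α} (hRS : R ≤ S) {x y : α} (h : Ranks R x y) : Ranks S x y :=
  h.imp (hRS x y) (hRS y x)

lemma le_mdStep (P : Fin n → Pref α) (p : α × α) : P ≤ mdStep P p := by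
  intro i x y hxy
  unfold mdStep
  split_ifs
  exacts [hxy, .single (.inl hxy), .single (.inl hxy)]

lemma ranks_mdStep (P : Fin n → Pref α) (p : α × α) (i : Fin n) :
    Ranks (mdStep P p i) p.1 p.2 := by
  unfold mdStep
  split_ifs with h
  exacts [h, .inl (.single (.inr ⟨rfl, rfl⟩)), .inr (.single (.inr ⟨rfl, rfl⟩))]

lemma le_MD (σ : List (α × α)) (P : Fin n → Pref α) : P ≤ MD σ P := by
  induction σ generalizing P with
  | nil => exact le_rfl
  | cons p σ ih => exact (le_mdStep P p).trans (ih _)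

lemma ranks_MD_of_mem {σ : List (α × α)} {p : α × α} (hp : p ∈ σ) (P : Fin n → Pref α)
    (i : Fin n) : Ranks (MD σ P i) p.1 p.2 := by
  induction σ generalizing P with
  | nil => cases hp
  | cons q σ ih =>
    rcases List.mem_cons.1 hp with rfl | hp
    · exact (ranks_mdStep P p i).mono (le_MD σ _ i)
    · exact ih hp _

lemma IsUpdateOrder.mem_or_mem [DecidableEq α] {σ : List (α × α)} (hσ : IsUpdateOrder σ) {x y : α}
    (hxy : x ≠ y) : (x, y) ∈ σ ∨ (y, x) ∈ σ := by
  by_contra! h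
  have hcount := hσ.2 x y hxy
  rw [List.count_eq_zero_of_not_mem h.1, List.count_eq_zero_of_not_mem h.2] at hcount
  exact absurd hcount (by decide)

lemma IsUpdateOrder.ranks_MD [DecidableEq α] {σ : List (α × α)} (hσ : IsUpdateOrder σ)
    (P : Fin n → Pref α) (i : Fin n) {x y : α} (hxy : x ≠ y) : Ranks (MD σ P i) x y :=
  (hσ.mem_or_mem hxy).elim (ranks_MD_of_mem · P i) fun h => (ranks_MD_of_mem h P i).symm

lemma IsUpdateOrder.dominant_MD_of_undominated [DecidableEq α] {σ : List (α × α)}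
    (hσ : IsUpdateOrder σ) {i : Fin n} {x : α} (hx : Undominated (MD σ P i) x) :
    Dominant (MD σ P i) x :=
  fun y hy => (hσ.ranks_MD P i hy.symm).resolve_right (hx y)

lemma mdStep_le [∀ i, IsTrans α (Q i)] (hPQ : P ≤ Q) {p : α × α}
    (hmajority : ∀ i, ¬ Ranks (P i) p.1 p.2 →
      support P p.2 p.1 < support P p.1 p.2 ∧ Q i p.1 p.2 ∨
      support P p.1 p.2 < support P p.2 p.1 ∧ Q i p.2 p.1) :
    mdStep P p ≤ Q := by
  have transGen_le {i : Fin n} {u v : α} (huv : Q i u v) :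
      Relation.TransGen (fun x y => P i x y ∨ x = u ∧ y = v) ≤ Q i := by
    apply Relation.transGen_minimal
    rintro x y (h | ⟨rfl, rfl⟩)
    exacts [hPQ i x y h, huv]
  intro i
  unfold mdStep
  split_ifs with hranked hle
  · exact hPQ i
  · rcases hmajority i hranked with ⟨-, h⟩ | ⟨hlt, -⟩
    exacts [transGen_le h, absurd hle hlt.not_ge]
  · rcases hmajority i hranked with ⟨hlt, -⟩ | ⟨-, h⟩
    exacts [absurd hlt.le hle, transGen_le h]

lemma support_lt_support_of_unopposed {x y : α} {i : Fin n} (hi : P i x y)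
    (hunopposed : ∀ j, ¬ P j y x) : support P y x < support P x y := by
  have hzero : support P y x = 0 := by simp [support, hunopposed]
  rw [hzero]
  exact Finset.card_pos.2 ⟨i, by simpa using hi⟩

end MajorityDynamics

section PluralityDominance

variable {α : Type} {n : ℕ} {P : Fin n → Pref α}

lemma Dominant.eq {R : Pref α} (hR : ∀ x y, R x y → ¬ R y x) {x y : α} (hx : Dominant R x)
    (hy : Dominant R y) : x = y := by
  by_contra hxy
  exact hR x y (hx y (Ne.symm hxy)) (hy x hxy)

lemma domCount_pos {x : α} : 0 < domCount P x ↔ ∃ i, Dominant (P i) x := by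
  simp [domCount, Finset.card_pos, Finset.filter_nonempty_iff]

lemma plurDomConsensus_of_forall_dominant_eq {a : α} {i : Fin n} (ha : Dominant (P i) a)
    (huniq : ∀ j x, Dominant (P j) x → x = a) : PlurDomConsensus P a := by
  have eq_of_pos {x : α} (hx : 0 < domCount P x) : x = a :=
    let ⟨j, hj⟩ := domCount_pos.1 hx
    huniq j x hj
  refine ⟨⟨domCount_pos.2 ⟨i, ha⟩, fun x => ?_⟩, fun x hx => eq_of_pos hx.1⟩
  rcases Nat.eq_zero_or_pos (domCount P x) with hzero | hpos
  exacts [hzero ▸ Nat.zero_le _, eq_of_pos hpos ▸ le_rfl]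

lemma not_plurDomConsensus_of_injective_dominant [Nontrivial (Fin n)]
    (hP : ∀ i x y, P i x y → ¬ P i y x) {top : Fin n → α} (htop : Function.Injective top)
    (hdom : ∀ i, Dominant (P i) (top i)) (x : α) : ¬ PlurDomConsensus P x := by
  have domCount_le_one (y : α) : domCount P y ≤ 1 := by
    refine Finset.card_le_one.2 fun i hi j hj => htop ?_
    exact ((hdom i).eq (hP i) (Finset.mem_filter.1 hi).2).trans
      ((hdom j).eq (hP j) (Finset.mem_filter.1 hj).2).symm
  have plurDomTop_top (i : Fin n) : PlurDomTop P (top i) :=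
    have hpos := domCount_pos.2 ⟨i, hdom i⟩
    ⟨hpos, fun y => (domCount_le_one y).trans hpos⟩
  rintro ⟨-, huniq⟩
  obtain ⟨i, j, hij⟩ := exists_pair_ne (Fin n)
  exact hij (htop ((huniq _ (plurDomTop_top i)).trans (huniq _ (plurDomTop_top j)).symm))

end PluralityDominance

section LeaderFollower

variable {α : Type} [LinearOrder α] {a b : α} {σ : List (α × α)}

/-- The profile of a leader (agent `0`), who ranks smaller alternatives higher, and a follower
(agent `1`), whose only opinion is that `a` is the worst alternative. -/
def leaderFollower (a : α) : Fin 2 → Pref α :=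
  ![(· < ·), fun x y => x ≠ a ∧ y = a]

/-- The complete profile to which majority dynamics takes `leaderFollower a`: the follower has
copied the leader on all pairs avoiding `a`. It serves as an upper bound for the dynamics. -/
def leaderFollowerLimit (a : α) : Fin 2 → Pref α :=
  ![(· < ·), fun x y => x ≠ a ∧ (y = a ∨ x < y)]

lemma isPref_leaderFollower (a : α) (i : Fin 2) : IsPref (leaderFollower a i) := by
  fin_cases i
  · exact ⟨fun x => lt_irrefl x, fun x y z => lt_trans⟩
  · exact ⟨fun x hx => hx.1 hx.2, fun x y z hxy hyz => ⟨hxy.1, hyz.2⟩⟩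

lemma leaderFollower_le_limit (a : α) : leaderFollower a ≤ leaderFollowerLimit a := by
  intro i
  fin_cases i
  · exact le_rfl
  · exact fun x y h => ⟨h.1, .inl h.2⟩

instance isTrans_leaderFollowerLimit (a : α) (i : Fin 2) :
    IsTrans α (leaderFollowerLimit a i) := by
  constructor
  fin_cases i
  · exact fun x y z => lt_trans
  · rintro x y z ⟨hx, hxy⟩ ⟨hy, hyz⟩
    exact ⟨hx, hyz.imp_right (hxy.resolve_left hy).trans⟩

lemma asymm_leaderFollowerLimit (a : α) (i : Fin 2) (x y : α) :
    leaderFollowerLimit a i x y → ¬ leaderFollowerLimit a i y x := by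
  fin_cases i
  · exact lt_asymm
  · rintro ⟨hx, hxy⟩ ⟨hy, hyx⟩
    exact lt_asymm (hxy.resolve_left hy) (hyx.resolve_left hx)

section InvariantInterval

variable {P : Fin 2 → Pref α}

lemma support_lt_and_leaderFollowerLimit_of_lt (hlower : leaderFollower a ≤ P)
    (hupper : P ≤ leaderFollowerLimit a) {x y : α} (hxy : x < y) (hunranked : ¬ Ranks (P 1) x y) :
    support P y x < support P x y ∧ leaderFollowerLimit a 1 x y := by
  refine ⟨support_lt_support_of_unopposed (hlower 0 x y hxy) (Fin.forall_fin_two.2 ⟨?_, ?_⟩), ?_⟩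
  · exact fun hyx => lt_asymm hxy (hupper 0 y x hyx)
  · exact fun hyx => hunranked (.inr hyx)
  · refine ⟨?_, .inr hxy⟩
    rintro rfl
    exact hunranked (.inr (hlower 1 y x ⟨hxy.ne', rfl⟩))

lemma mdStep_le_leaderFollowerLimit (hlower : leaderFollower a ≤ P)
    (hupper : P ≤ leaderFollowerLimit a) {p : α × α} (hp : p.1 ≠ p.2) :
    mdStep P p ≤ leaderFollowerLimit a := by
  refine mdStep_le hupper (Fin.forall_fin_two.2 ⟨?_, ?_⟩)
  · exact fun hunranked => absurd (hp.lt_or_gt.imp (hlower 0 _ _) (hlower 0 _ _)) hunranked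
  · exact fun hunranked => hp.lt_or_gt.imp
      (support_lt_and_leaderFollowerLimit_of_lt hlower hupper · hunranked)
      (support_lt_and_leaderFollowerLimit_of_lt hlower hupper · fun h => hunranked h.symm)

lemma MD_le_leaderFollowerLimit (hlower : leaderFollower a ≤ P)
    (hupper : P ≤ leaderFollowerLimit a) (hσ : ∀ p ∈ σ, p.1 ≠ p.2) :
    MD σ P ≤ leaderFollowerLimit a := by
  induction σ generalizing P with
  | nil => exact hupper
  | cons p σ ih =>
    rw [List.forall_mem_cons] at hσ
    exact ih (hlower.trans (le_mdStep P p)) (mdStep_le_leaderFollowerLimit hlower hupper hσ.1) hσ.2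

end InvariantInterval

lemma plurDomConsensus_leaderFollower (ha : IsBot a) {c : α} (hba : b ≠ a) (hca : c ≠ a)
    (hcb : c ≠ b) : PlurDomConsensus (leaderFollower a) a := by
  have ha_dom : Dominant (leaderFollower a 0) a := fun y hy => (ha y).lt_of_ne hy.symm
  refine plurDomConsensus_of_forall_dominant_eq ha_dom (Fin.forall_fin_two.2 ⟨?_, ?_⟩)
  · exact fun x hx => hx.eq (fun _ _ => lt_asymm) ha_dom
  · intro x hx
    by_cases hxb : x = b
    · exact absurd (hx c (hxb ▸ hcb)).2 hca
    · exact absurd (hx b (Ne.symm hxb)).2 hba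

lemma undominated_leaderFollowerLimit (ha : IsBot a) (hab : a ⋖ b) (i : Fin 2) :
    Undominated (leaderFollowerLimit a i) (![a, b] i) := by
  fin_cases i
  · exact fun y hy => (ha y).not_gt hy
  · rintro y ⟨hy, hba | hyb⟩
    · exact hab.lt.ne' hba
    · exact hab.2 ((ha y).lt_of_ne hy.symm) hyb

lemma not_plurDomConsensus_MD_leaderFollower [DecidableEq α] (ha : IsBot a) (hab : a ⋖ b)
    (hσ : IsUpdateOrder σ) (x : α) : ¬ PlurDomConsensus (MD σ (leaderFollower a)) x := by
  have hle : MD σ (leaderFollower a) ≤ leaderFollowerLimit a :=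
    MD_le_leaderFollowerLimit le_rfl (leaderFollower_le_limit a) hσ.1
  have hasymm (i : Fin 2) (y z : α) (hyz : MD σ (leaderFollower a) i y z) :
      ¬ MD σ (leaderFollower a) i z y := fun hzy =>
    asymm_leaderFollowerLimit a i y z (hle i y z hyz) (hle i z y hzy)
  refine not_plurDomConsensus_of_injective_dominant hasymm (top := ![a, b]) ?_ (fun i => ?_) x
  · simpa [Function.Injective, Fin.forall_fin_two] using ⟨hab.lt.ne, hab.lt.ne'⟩
  · exact hσ.dominant_MD_of_undominated fun y hy =>
      undominated_leaderFollowerLimit ha hab i y (hle i _ _ hy)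

end LeaderFollower

theorem stmt_17_general (m : ℕ) (hm : 3 ≤ m) :
    ∃ (P : Fin 2 → Pref (Fin m)) (a : Fin m),
      (∀ i, IsPref (P i)) ∧ PlurDomConsensus P a ∧
      ∀ σ : List (Fin m × Fin m), IsUpdateOrder σ →
        ∀ b, ¬ PlurDomConsensus (MD σ P) b := by
  obtain ⟨k, rfl⟩ := Nat.exists_eq_add_of_le' hm
  have hbot : IsBot (0 : Fin (k + 3)) := Fin.zero_le
  have hcov : (0 : Fin (k + 3)) ⋖ 1 := Fin.covBy_iff.2 (by simp)
  have h20 : (⟨2, hm⟩ : Fin (k + 3)) ≠ 0 := by simp [Fin.ext_iff]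
  have h21 : (⟨2, hm⟩ : Fin (k + 3)) ≠ 1 := by simp [Fin.ext_iff]
  exact ⟨leaderFollower 0, 0, isPref_leaderFollower 0,
    plurDomConsensus_leaderFollower hbot hcov.lt.ne' h20 h21,
    fun σ hσ => not_plurDomConsensus_MD_leaderFollower hbot hcov hσ⟩

/-- Majority dynamics does not enable positive PlurDom-consensus
existence control. -/
theorem stmt_17 :
    ∃ (m n : ℕ) (P : Fin n → Pref (Fin m)) (a : Fin m),
      3 ≤ m ∧ (∀ i, IsPref (P i)) ∧ PlurDomConsensus P a ∧
      ∀ σ : List (Fin m × Fin m), IsUpdateOrder σ →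
        ∀ b, ¬ PlurDomConsensus (MD σ P) b :=
  let ⟨P, a, h⟩ := stmt_17_general 3 le_rfl
  ⟨3, 2, P, a, le_rfl, h⟩

end
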